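/- Let n ≥ 3 be an integer, let c be an integer with 1 ≤ c ≤ n − 1, let i ≥ 1, and let (a,b) = (1,c)·(Φ⁻¹)^i, where Φ⁻¹ = [[−1, −n], [n, n²−1]] acts on row vectors on the right. Then for every integer t with 1 ≤ t ≤ a − 1, the pair (a − t, b + t) is not an imaginary root, i.e., q(a − t, b + t) ≥ 0. -/

import Mathlib

/-- Right action of the inverse Coxeter matrix `Φ⁻¹ = [[−1, −n], [n, n²−1]]`
of the `n`-Kronecker quiver on an integer row vector:
`(x,y)·Φ⁻¹ = (n·y − x, (n²−1)·y − n·x)`. -/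
def phiInv (n : ℤ) (p : ℤ × ℤ) : ℤ × ℤ :=
  (n * p.2 - p.1, (n ^ 2 - 1) * p.2 - n * p.1)

/-- The Tits form of the `n`-Kronecker quiver is invariant under `phiInv`. -/
lemma tits_phiInv (n : ℤ) (p : ℤ × ℤ) :
    (phiInv n p).1 ^ 2 + (phiInv n p).2 ^ 2 - n * (phiInv n p).1 * (phiInv n p).2 =
      p.1 ^ 2 + p.2 ^ 2 - n * p.1 * p.2 := by
  simp only [phiInv]
  ring

lemma tits_phiInv_iterate (n : ℤ) (p : ℤ × ℤ) (i : ℕ) :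
    ((phiInv n)^[i] p).1 ^ 2 + ((phiInv n)^[i] p).2 ^ 2
        - n * ((phiInv n)^[i] p).1 * ((phiInv n)^[i] p).2 =
      p.1 ^ 2 + p.2 ^ 2 - n * p.1 * p.2 := by
  induction i with
  | zero => rfl
  | succ k ih => rw [Function.iterate_succ_apply', tits_phiInv, ih]

/-- `phiInv` preserves positivity of the first entry and any nonnegative lower bound on the
difference of the entries. -/
lemma phiInv_gap {n d : ℤ} (hn : 3 ≤ n) (hd : 0 ≤ d) {p : ℤ × ℤ} (hp : 1 ≤ p.1)
    (hgap : d ≤ p.2 - p.1) :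
    1 ≤ (phiInv n p).1 ∧ d ≤ (phiInv n p).2 - (phiInv n p).1 := by
  obtain ⟨x, y⟩ := p
  simp only [phiInv] at *
  have hy : x ≤ y := by linarith
  constructor
  · nlinarith
  · have h₁ : 0 ≤ (n ^ 2 - n - 1 - 1) * (y - x) := mul_nonneg (by nlinarith) (by linarith)
    have h₂ : 0 ≤ n * (n - 2) * x :=
      mul_nonneg (mul_nonneg (by linarith) (by linarith)) (by linarith)
    linarith

lemma phiInv_iterate_gap {n d : ℤ} (hn : 3 ≤ n) (hd : 0 ≤ d) {p : ℤ × ℤ} (hp : 1 ≤ p.1)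
    (hgap : d ≤ p.2 - p.1) (i : ℕ) :
    1 ≤ ((phiInv n)^[i] p).1 ∧ d ≤ ((phiInv n)^[i] p).2 - ((phiInv n)^[i] p).1 := by
  induction i with
  | zero => exact ⟨hp, hgap⟩
  | succ k ih =>
    rw [Function.iterate_succ_apply']
    exact phiInv_gap hn hd ih.1 ih.2

/-- For `n ≥ 3`, `1 ≤ c ≤ n−1`, `i ≥ 1` and
`(a,b) = (1,c)·(Φ⁻¹)^i`: for every `1 ≤ t ≤ a − 1`, the pair `(a−t, b+t)`
is not an imaginary root, i.e. `q(a−t, b+t) ≥ 0`. -/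
theorem stmt6 (n c : ℤ) (hn : 3 ≤ n) (hc1 : 1 ≤ c) (hc2 : c ≤ n - 1)
    (i : ℕ) (hi : 1 ≤ i) (a b : ℤ) (hab : (a, b) = (phiInv n)^[i] (1, c))
    (t : ℤ) (ht1 : 1 ≤ t) (ht2 : t ≤ a - 1) :
    0 ≤ (a - t) ^ 2 + (b + t) ^ 2 - n * (a - t) * (b + t) := by
  have hq := tits_phiInv_iterate n (1, c) i
  have hgap := (phiInv_iterate_gap hn (sub_nonneg.mpr hc1) (p := (1, c)) le_rfl le_rfl i).2
  rw [← hab] at hq hgap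
  simp only at hq hgap
  have hstep : c ≤ t * (t + (b - a)) := by nlinarith
  have hmul : (n + 2) * c ≤ (n + 2) * (t * (t + (b - a))) :=
    mul_le_mul_of_nonneg_left hstep (by linarith)
  linarith [sq_nonneg c]
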